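/- arXiv:2301.05680 — 3 statements merged into one kernel-verified Lean document; each statement's English description precedes it below -/
import Mathlib

section
/- Let x_1, …, x_m be non-negative real numbers. If ∑_{i=1}^m x_i ≤ ∑_{i=1}^m x_i^2, then ∑_{i=1}^m x_i^2 ≤ ∑_{i=1}^m x_i^3. -/
/-- Lemma C.1: for non-negative reals, if the sum is at most the sum of squares,
then the sum of squares is at most the sum of cubes. -/
theorem sum_sq_le_sum_cube (m : ℕ) (x : Fin m → ℝ) (hx : ∀ i, 0 ≤ x i)
    (h : ∑ i, x i ≤ ∑ i, (x i) ^ 2) :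
    ∑ i, (x i) ^ 2 ≤ ∑ i, (x i) ^ 3 := by
  -- Termwise, `x ^ 3 - 2 * x ^ 2 + x = x * (x - 1) ^ 2 ≥ 0`.
  have key : ∑ i, ((x i) ^ 2 + (x i) ^ 2) ≤ ∑ i, ((x i) ^ 3 + x i) :=
    Finset.sum_le_sum fun i _ => by
      linarith [mul_nonneg (hx i) (sq_nonneg (x i - 1))]
  rw [Finset.sum_add_distrib, Finset.sum_add_distrib] at key
  linarith
end

section
/- Let p : [0,∞) → [0,∞) be a differentiable function with p(x) > 0 for all x > 0, such that q(x) = x/p(x) is a strictly increasing concave function on (0,∞). Let x_1, …, x_ℓ be non-negative reals, let K, L > 0, and let a > 0 satisfy q(a) = K/L. If ∑_{i=1}^ℓ x_i ≥ K and ∑_{i=1}^ℓ p(x_i) ≤ L, then ∑_{i=1}^ℓ x_i·p(x_i) ≥ a·L. -/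
/-!
Let `q x = x / p x` and `c = q'(a)`. By concavity the graph of `q` lies below its tangent at `a`,
so `x ≤ p x * (q a + c * (x - a))` for `x > 0`. This also holds at `x = 0`, because positivity of
`q` forces the intercept `q a - c * a` to be nonnegative. Summing over the `x i` and using
`∑ p (x i) ≤ L` gives `K ≤ (K / L - c * a) * L + c * ∑ x i * p (x i)`, that is,
`c * (a * L) ≤ c * ∑ x i * p (x i)`; strict monotonicity of `q` gives `c > 0`.
-/

/-- A concave function on `(0, ∞)` lies below its tangent line at any point `a > 0`. -/
lemma concaveOn_Ioi_le_tangent {q : ℝ → ℝ} {a c : ℝ} (hq : ConcaveOn ℝ (Set.Ioi 0) q)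
    (ha : 0 < a) (hd : HasDerivAt q c a) {y : ℝ} (hy : 0 < y) :
    q y ≤ q a + c * (y - a) := by
  rcases lt_trichotomy y a with h | h | h
  · have := hq.le_slope_of_hasDerivAt hy ha h hd
    rw [slope_def_field, le_div_iff₀ (sub_pos.2 h)] at this
    linarith
  · simp [h]
  · have := hq.slope_le_of_hasDerivAt ha hy h hd
    rw [slope_def_field, div_le_iff₀ (sub_pos.2 h)] at this
    linarith

/-- Lemma 5.5: for p differentiable on [0,∞) with q(x) = x/p(x) strictly increasing
and concave on (0,∞), if ∑ xᵢ ≥ K and ∑ p(xᵢ) ≤ L then ∑ xᵢ·p(xᵢ) ≥ q⁻¹(K/L)·L. -/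
theorem concave_allocation (p : ℝ → ℝ)
    (hp_diff : DifferentiableOn ℝ p (Set.Ici 0))
    (hp_nonneg : ∀ x : ℝ, 0 ≤ x → 0 ≤ p x)
    (hp_pos : ∀ x : ℝ, 0 < x → 0 < p x)
    (hq_mono : StrictMonoOn (fun x => x / p x) (Set.Ioi 0))
    (hq_conc : ConcaveOn ℝ (Set.Ioi 0) (fun x => x / p x))
    (ℓ : ℕ) (x : Fin ℓ → ℝ) (hx : ∀ i, 0 ≤ x i)
    (K L a : ℝ) (hK : 0 < K) (hL : 0 < L) (ha : 0 < a)
    (haq : a / p a = K / L)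
    (hsum : K ≤ ∑ i, x i) (hpsum : ∑ i, p (x i) ≤ L) :
    a * L ≤ ∑ i, x i * p (x i) := by
  have hdiff : DifferentiableAt ℝ (fun x => x / p x) a :=
    differentiableAt_id.div (hp_diff.differentiableAt (Ici_mem_nhds ha)) (hp_pos a ha).ne'
  obtain ⟨c, hd⟩ : ∃ c, HasDerivAt (fun x => x / p x) c a := ⟨_, hdiff.hasDerivAt⟩
  have tangent : ∀ y, 0 < y → y / p y ≤ K / L + c * (y - a) := fun y hy =>
    haq ▸ concaveOn_Ioi_le_tangent hq_conc ha hd hy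
  have hc : 0 < c := by
    have h1 := tangent (a + a) (by positivity)
    have h2 : a / p a < (a + a) / p (a + a) :=
      hq_mono (Set.mem_Ioi.2 ha) (Set.mem_Ioi.2 (add_pos ha ha)) (by linarith)
    rw [haq] at h2
    exact pos_of_mul_pos_left (by linarith : 0 < c * a) ha.le
  have hint : 0 ≤ K / L - c * a := by
    refine le_of_forall_pos_le_add fun ε hε => ?_
    have h1 := tangent (ε / c) (by positivity)
    have h2 : 0 < ε / c / p (ε / c) := div_pos (by positivity) (hp_pos _ (by positivity))
    have h3 : c * (ε / c) = ε := mul_div_cancel₀ ε hc.ne'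
    linarith
  have key : ∀ i, x i ≤ (K / L - c * a) * p (x i) + c * (x i * p (x i)) := by
    intro i
    rcases (hx i).eq_or_lt with h | h
    · rw [← h]
      have := mul_nonneg hint (hp_nonneg 0 le_rfl)
      linarith
    · have := (div_le_iff₀ (hp_pos _ h)).1 (tangent _ h)
      linarith
  have hS := Finset.sum_le_sum fun i (_ : i ∈ Finset.univ) => key i
  rw [Finset.sum_add_distrib, ← Finset.mul_sum, ← Finset.mul_sum] at hS
  have hL' := mul_le_mul_of_nonneg_left hpsum hint
  have hKL : K / L * L = K := div_mul_cancel₀ K hL.ne'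
  refine le_of_mul_le_mul_left ?_ hc
  linarith
end

section
/- Let a, b > 0 and γ > 0 be reals, let k and n be reals with 0 < k < n, and let α be a real satisfying √(k/n) < α < min( 1/(16·√(e^{γ+1}+1)), √(1/(8b)) ). Then n − k·(e^{γ+1} + 1) > 0, and a · exp( [ b·(2α√(kn) − k)^2 + 4·e^{γ/2 + 1/2}·k·√(n−k)·(2α√n − √k) ] / ( n − k·(e^{γ+1} + 1) ) − k − γk ) < a · e^{−γk}. -/
/-!
Write `E = exp (γ + 1)`, `s = √k`, `m = √n`, `x = 2αm`; the hypotheses say `s < x / 2`,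
`16 α √(E + 1) < 1` and `8 b α² < 1`. Positivity of the denominator follows from
`k < α² n` and `256 α² (E + 1) < 1`.

Since `2α√(kn) - k = s (x - s)`, the exponential bound amounts to
`b (x - s)² + 4 √E √(n - k) (x - s) < n - k (E + 1)`.
Bounding `x - s` by `x` in each summand gives about `n / 2` twice, which is just too much, so the
relative gain `(x - s) / x` has to be kept: after multiplication by `x`, each summand is at most
`(n / 2) (x - s)`, and together they are less than `n x - n s`. The deficit `n s` absorbs
`k (E + 1) x = s² (E + 1) x`, because `s x (E + 1) ≤ 2 α² (E + 1) n < n`.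
-/

/-- The numerator estimate, in terms of `s = √k`, `m = √n`, `q = √E` and `r = √(n - k)`. -/
lemma numerator_lt (b α s m E q r : ℝ) (hb : 0 < b) (hs : 0 < s) (hm : 0 < m)
    (hα : 0 < α) (hq : 0 ≤ q) (hE : 0 < E) (hr : r ≤ m)
    (hsα : s < α * m) (hαE : 256 * α ^ 2 * (E + 1) < 1) (hαq : 16 * α * q ≤ 1)
    (hαb : 8 * b * α ^ 2 < 1) :
    b * (2 * α * m - s) ^ 2 + 4 * q * r * (2 * α * m - s) < m ^ 2 - s ^ 2 * (E + 1) := by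
  have hx : 0 < 2 * α * m := by positivity
  obtain ⟨x, hxd⟩ : ∃ x, x = 2 * α * m := ⟨_, rfl⟩
  rw [← hxd] at hx ⊢
  have hd : 0 < x - s := by nlinarith [mul_pos hα hm]
  have h1 : b * (x - s) ^ 2 * x < m ^ 2 / 2 * (x - s) := by
    have e : b * x ^ 2 < m ^ 2 / 2 := by
      rw [hxd]; nlinarith [mul_lt_mul_of_pos_right hαb (pow_pos hm 2)]
    have e2 : b * ((x - s) * x) ≤ b * x ^ 2 := by
      apply mul_le_mul_of_nonneg_left _ hb.le
      nlinarith [mul_pos hs hx]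
    nlinarith [mul_lt_mul_of_pos_right (e2.trans_lt e) hd]
  have h2 : 4 * q * r * (x - s) * x ≤ m ^ 2 / 2 * (x - s) := by
    have e : 4 * q * r * x ≤ m ^ 2 / 2 := by
      have e1 : 4 * q * r * x ≤ 4 * q * m * x := by gcongr
      have e2 : 4 * q * m * x = 16 * α * q * (m ^ 2 / 2) := by rw [hxd]; ring
      nlinarith [mul_le_mul_of_nonneg_right hαq (by positivity : 0 ≤ m ^ 2 / 2)]
    nlinarith [mul_le_mul_of_nonneg_right e hd.le]
  have h3 : s ^ 2 * (E + 1) * x ≤ m ^ 2 * s := by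
    have e1 : s * x * (E + 1) ≤ (α * m) * x * (E + 1) := by gcongr
    have e2 : (α * m) * x * (E + 1) = 2 * (α ^ 2 * (E + 1)) * m ^ 2 := by rw [hxd]; ring
    have e3 : s * x * (E + 1) ≤ m ^ 2 := by nlinarith [pow_pos hm 2]
    nlinarith [mul_le_mul_of_nonneg_left e3 hs.le]
  refine lt_of_mul_lt_mul_right ?_ hx.le
  nlinarith

/-- Lemma B.2: under these conditions on α, the completeness bound
for the k-threshold problem with α√(kn) queries is less than a·e^(−γk). -/
theorem kthreshold_completeness (a b γ k n α : ℝ) (ha : 0 < a) (hb : 0 < b)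
    (hγ : 0 < γ) (hk : 0 < k) (hkn : k < n)
    (hα1 : Real.sqrt (k / n) < α)
    (hα2 : α < min (1 / (16 * Real.sqrt (Real.exp (γ + 1) + 1)))
      (Real.sqrt (1 / (8 * b)))) :
    0 < n - k * (Real.exp (γ + 1) + 1) ∧
    a * Real.exp ((b * (2 * α * Real.sqrt (k * n) - k) ^ 2 +
        4 * Real.exp (γ / 2 + 1 / 2) * k * Real.sqrt (n - k) *
          (2 * α * Real.sqrt n - Real.sqrt k)) /
        (n - k * (Real.exp (γ + 1) + 1)) - k - γ * k) <
      a * Real.exp (-γ * k) := by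
  have hn : 0 < n := hk.trans hkn
  obtain ⟨hα3, hα4⟩ := lt_min_iff.1 hα2
  have hα : 0 < α := (Real.sqrt_nonneg _).trans_lt hα1
  have hq2 : Real.exp (γ / 2 + 1 / 2) ^ 2 = Real.exp (γ + 1) := by
    rw [← Real.exp_nat_mul]; congr 1; push_cast; ring
  have hq := Real.exp_pos (γ / 2 + 1 / 2)
  have hE := Real.exp_pos (γ + 1)
  generalize Real.exp (γ / 2 + 1 / 2) = q at *
  generalize Real.exp (γ + 1) = E at *
  have hs := Real.sqrt_pos.2 hk
  have hm := Real.sqrt_pos.2 hn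
  have hs2 := Real.sq_sqrt hk.le
  have hm2 := Real.sq_sqrt hn.le
  have hr : √(n - k) ≤ √n := Real.sqrt_le_sqrt (by linarith)
  have hsα : √k < α * √n := by
    rwa [Real.sqrt_div hk.le, div_lt_iff₀ hm] at hα1
  have hE1 : 0 < √(E + 1) := Real.sqrt_pos.2 (by linarith)
  have hαR : 16 * α * √(E + 1) < 1 := by
    rw [lt_div_iff₀ (by positivity)] at hα3
    linarith
  have hαE : 256 * α ^ 2 * (E + 1) < 1 := by
    have h := pow_lt_one₀ (by positivity) hαR two_ne_zero
    rw [mul_pow, Real.sq_sqrt (by linarith)] at h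
    linarith
  have hαq : 16 * α * q ≤ 1 := by
    have : q ≤ √(E + 1) := Real.le_sqrt_of_sq_le (by linarith)
    exact (mul_le_mul_of_nonneg_left this (by positivity)).trans hαR.le
  have hαb : 8 * b * α ^ 2 < 1 := by
    rw [Real.lt_sqrt hα.le, lt_div_iff₀ (by positivity)] at hα4
    linarith
  have key := numerator_lt b α √k √n E q √(n - k) hb hs hm hα hq.le hE hr hsα hαE hαq hαb
  rw [hs2, hm2] at key
  have hD : 0 < n - k * (E + 1) := by
    have h := pow_lt_pow_left₀ hsα hs.le two_ne_zero
    rw [mul_pow, hs2, hm2] at h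
    nlinarith [mul_lt_mul_of_pos_right h (by linarith : 0 < E + 1)]
  refine ⟨hD, mul_lt_mul_of_pos_left (Real.exp_lt_exp.2 ?_) ha⟩
  have hnum : b * (2 * α * √(k * n) - k) ^ 2 + 4 * q * k * √(n - k) * (2 * α * √n - √k)
      = k * (b * (2 * α * √n - √k) ^ 2 + 4 * q * √(n - k) * (2 * α * √n - √k)) := by
    have h : 2 * α * √(k * n) - k = √k * (2 * α * √n - √k) := by
      rw [Real.sqrt_mul hk.le]; linear_combination hs2
    rw [h, mul_pow, hs2]; ring
  have : (b * (2 * α * √(k * n) - k) ^ 2 + 4 * q * k * √(n - k) * (2 * α * √n - √k)) /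
      (n - k * (E + 1)) < k := by
    rw [div_lt_iff₀ hD, hnum]
    exact mul_lt_mul_of_pos_left key hk
  linarith
end
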